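/- arXiv:2211.03289 — 10 statements merged into one kernel-verified Lean document; each statement's English description precedes it below -/
import Mathlib

section
/- Let n, r ≥ 0 and let Γ : [n+r] → [n] × [r] be a monotone map (where [n+r] = Fin(n+r+1) and [n] × [r] carries the componentwise order). If Γ is injective, then the composite fst ∘ Γ : [n+r] → [n] is surjective. -/
/-- Let `n, r ≥ 0` and let `Γ : [n+r] → [n] × [r]` be a monotone map
(where `[k] = Fin (k+1)` and `[n] × [r]` carries the componentwise order).
If `Γ` is injective, then `fst ∘ Γ : [n+r] → [n]` is surjective. -/
theorem maximal_chain_fst_surjective (n r : ℕ)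
    (Γ : Fin (n + r + 1) → Fin (n + 1) × Fin (r + 1))
    (hmono : Monotone Γ) (hinj : Function.Injective Γ) :
    Function.Surjective (fun j => (Γ j).1) := by
  intro a
  by_contra hne
  have hne' : ∀ j, (Γ j).1.val ≠ a.val := fun j h => hne ⟨j, Fin.ext h⟩
  let g : Fin (n + r + 1) → ℕ := fun j =>
    (Γ j).2.val + (if (Γ j).1.val < a.val then (Γ j).1.val else (Γ j).1.val - 1)
  have hg : StrictMono g := by
    intro i j hij
    have h := hmono hij.le
    have h1 : (Γ i).1.val ≤ (Γ j).1.val := h.1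
    have h2 : (Γ i).2.val ≤ (Γ j).2.val := h.2
    have h3 : ¬ ((Γ i).1.val = (Γ j).1.val ∧ (Γ i).2.val = (Γ j).2.val) := fun e =>
      hij.ne (hinj (Prod.ext (Fin.ext e.1) (Fin.ext e.2)))
    have hi := hne' i
    have hj := hne' j
    show _ + _ < _ + _
    split_ifs <;> omega
  have hb : ∀ j, g j < n + r := by
    intro j
    have := hne' j
    have := a.isLt
    have := (Γ j).1.isLt
    have := (Γ j).2.isLt
    show _ + _ < _
    split_ifs <;> omega
  have hc := Fintype.card_le_of_injective (fun j => (⟨g j, hb j⟩ : Fin (n + r)))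
    (fun i j h => hg.injective (Fin.mk.inj_iff.mp h))
  simp at hc
end

section
/- Let Γ : [n+r] → [n] × [r] be a maximal chain. Then for every i ∈ [n+r] one has ((Γ i).fst : ℕ) + ((Γ i).snd : ℕ) = (i : ℕ). -/
/-- Let `Γ : [n+r] → [n] × [r]` be a maximal chain (monotone and
injective, with the componentwise order on the codomain). Then for every
`i ∈ [n+r]` one has `(Γ i).fst + (Γ i).snd = i` in `ℕ`. -/
theorem maximal_chain_coord_sum (n r : ℕ)
    (Γ : Fin (n + r + 1) → Fin (n + 1) × Fin (r + 1))
    (hmono : Monotone Γ) (hinj : Function.Injective Γ) :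
    ∀ i : Fin (n + r + 1), ((Γ i).1 : ℕ) + ((Γ i).2 : ℕ) = (i : ℕ) := by
  have hs : StrictMono (fun i : Fin (n + r + 1) =>
      (⟨((Γ i).1 : ℕ) + ((Γ i).2 : ℕ), by omega⟩ : Fin (n + r + 1))) := by
    intro a b hab
    have h := hmono hab.le
    have hne : Γ a ≠ Γ b := fun e => hab.ne (hinj e)
    have h1 : ((Γ a).1 : ℕ) ≤ (Γ b).1 := h.1
    have h2 : ((Γ a).2 : ℕ) ≤ (Γ b).2 := h.2
    have h3 : ¬ (((Γ a).1 : ℕ) = (Γ b).1 ∧ ((Γ a).2 : ℕ) = (Γ b).2) := fun e =>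
      hne (Prod.ext (Fin.ext e.1) (Fin.ext e.2))
    simp only [Fin.mk_lt_mk]
    omega
  have he := (StrictMono.range_inj hs strictMono_id).mp (by
    rw [(Finite.injective_iff_surjective.mp hs.injective).range_eq, Set.range_id])
  intro i
  exact congrArg Fin.val (congrFun he i)
end

section
/- Let Γ : [n+r] → [n] × [r] be a maximal chain and let v ∈ [n+r] with 0 < v < n+r satisfy Γ(v+1) = ((Γ(v−1)).fst + 1, (Γ(v−1)).snd + 1). Say v ∈ Inn_fs(Γ) if moreover Γ(v+1) = ((Γ v).fst + 1, (Γ v).snd), and v ∈ Inn_bs(Γ) if moreover Γ(v+1) = ((Γ v).fst, (Γ v).snd + 1) (exactly one of the two holds). Then Γ ∘ δ_v : [n+r−1] → [n] × [r] is a global chain, and: (1) for every natural number i ≤ v, { j ∈ [n] | bs_Γ(j) ≥ i } = { j ∈ [n] | bs_{Γ∘δ_v}(j) ≥ i }; (2) if v ∈ Inn_fs(Γ), then for every i > v, { j ∈ [n] | bs_Γ(j) ≥ i } = { j ∈ [n] | bs_{Γ∘δ_v}(j) ≥ i−1 }; (3) if v ∈ Inn_bs(Γ), then for every i > v+1, {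 j ∈ [n] | bs_Γ(j) ≥ i } = { j ∈ [n] | bs_{Γ∘δ_v}(j) ≥ i−1 }. -/
/-- `bs_Γ(i) = min { j | (Γ j).fst = i }`, as a natural number
(`sInf` of the empty set is `0`; for global chains the set is nonempty). -/
noncomputable def bsN {q n r : ℕ} (Γ : Fin q → Fin (n + 1) × Fin (r + 1))
    (i : Fin (n + 1)) : ℕ :=
  sInf { j : ℕ | ∃ h : j < q, (Γ ⟨j, h⟩).1 = i }

theorem le_bsN_iff {q n r : ℕ} (Γ : Fin q → Fin (n + 1) × Fin (r + 1))
    (hs : Function.Surjective (fun k => (Γ k).1)) (j : Fin (n + 1)) (i : ℕ) :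
    i ≤ bsN Γ j ↔ ∀ k : ℕ, k < i → ∀ h : k < q, (Γ ⟨k, h⟩).1 ≠ j := by
  unfold bsN
  constructor
  · intro hi k hk h he
    have : sInf { j' : ℕ | ∃ h : j' < q, (Γ ⟨j', h⟩).1 = j } ≤ k := Nat.sInf_le ⟨h, he⟩
    omega
  · intro H
    obtain ⟨k, hk⟩ := hs j
    have hne : { j' : ℕ | ∃ h : j' < q, (Γ ⟨j', h⟩).1 = j }.Nonempty := ⟨k.1, k.2, hk⟩
    obtain ⟨h, he⟩ := Nat.sInf_mem hne
    by_contra hc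
    exact H _ (not_le.mp hc) h he

theorem chain_surj (n r : ℕ) (Γ : Fin (n + r + 1) → Fin (n + 1) × Fin (r + 1))
    (hmono : Monotone Γ) (hinj : Function.Injective Γ) :
    Function.Surjective (fun k => (Γ k).1) := by
  have hlt : ∀ a b : ℕ, ∀ (ha : a < n + r + 1) (hb : b < n + r + 1), a < b →
      ((Γ ⟨a, ha⟩).1 : ℕ) + ((Γ ⟨a, ha⟩).2 : ℕ) + 1 ≤
        ((Γ ⟨b, hb⟩).1 : ℕ) + ((Γ ⟨b, hb⟩).2 : ℕ) := by
    intro a b ha hb hab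
    have h1 : Γ ⟨a, ha⟩ ≤ Γ ⟨b, hb⟩ := hmono (Fin.mk_le_mk.mpr hab.le)
    have h2 : Γ ⟨a, ha⟩ ≠ Γ ⟨b, hb⟩ := fun h => by
      have := congrArg Fin.val (hinj h)
      simp at this
      omega
    have h3 : ((Γ ⟨a, ha⟩).1 : ℕ) ≤ ((Γ ⟨b, hb⟩).1 : ℕ) := h1.1
    have h4 : ((Γ ⟨a, ha⟩).2 : ℕ) ≤ ((Γ ⟨b, hb⟩).2 : ℕ) := h1.2
    by_contra hc
    exact h2 (Prod.ext (Fin.ext (by omega)) (Fin.ext (by omega)))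
  have hlow : ∀ k : ℕ, ∀ h : k < n + r + 1,
      k ≤ ((Γ ⟨k, h⟩).1 : ℕ) + ((Γ ⟨k, h⟩).2 : ℕ) := by
    intro k
    induction k with
    | zero => intro h; omega
    | succ k ih =>
      intro h
      have := ih (by omega)
      have := hlt k (k + 1) (by omega) h (by omega)
      omega
  have hup : ∀ d : ℕ, ∀ h : n + r - d < n + r + 1, d ≤ n + r →
      ((Γ ⟨n + r - d, h⟩).1 : ℕ) + ((Γ ⟨n + r - d, h⟩).2 : ℕ) + d ≤ n + r := by
    intro d
    induction d with
    | zero => intro h _; omega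
    | succ d ih =>
      intro h hd
      have := ih (by omega) (by omega)
      have := hlt (n + r - (d + 1)) (n + r - d) h (by omega) (by omega)
      omega
  have hsum : ∀ k : ℕ, ∀ h : k < n + r + 1,
      ((Γ ⟨k, h⟩).1 : ℕ) + ((Γ ⟨k, h⟩).2 : ℕ) = k := by
    intro k h
    have h1 := hlow k h
    have h2 := hup (n + r - k) (by omega) (by omega)
    have e : n + r - (n + r - k) = k := by omega
    simp only [e] at h2
    omega
  have key : ∀ k : ℕ, ∀ h : k < n + r + 1, ∀ j : ℕ, j ≤ ((Γ ⟨k, h⟩).1 : ℕ) →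
      ∃ k', ((Γ k').1 : ℕ) = j := by
    intro k
    induction k with
    | zero =>
      intro h j hj
      have := hsum 0 h
      exact ⟨⟨0, h⟩, by omega⟩
    | succ k ih =>
      intro h j hj
      by_cases hc : j ≤ ((Γ ⟨k, by omega⟩).1 : ℕ)
      · exact ih (by omega) j hc
      · have h1 := hsum k (by omega)
        have h2 := hsum (k + 1) h
        have h4 : ((Γ ⟨k, by omega⟩).2 : ℕ) ≤ ((Γ ⟨k + 1, h⟩).2 : ℕ) :=
          (hmono (Fin.mk_le_mk.mpr (Nat.le_succ k))).2
        exact ⟨⟨k + 1, h⟩, by omega⟩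
  intro j
  obtain ⟨k', hk'⟩ := key (n + r) (by omega) j (by
    have := hsum (n + r) (by omega)
    omega)
  exact ⟨k', Fin.ext hk'⟩

theorem succAbove_lo {m v k : ℕ} (hv : v < m + 1) (hk : k < m) (h : k < v) :
    (⟨v, hv⟩ : Fin (m + 1)).succAbove ⟨k, hk⟩ = ⟨k, by omega⟩ := by
  rw [Fin.succAbove_of_castSucc_lt _ _ (by simpa [Fin.lt_def] using h)]; rfl

theorem succAbove_hi {m v k : ℕ} (hv : v < m + 1) (hk : k < m) (h : v ≤ k) :
    (⟨v, hv⟩ : Fin (m + 1)).succAbove ⟨k, hk⟩ = ⟨k + 1, by omega⟩ := by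
  rw [Fin.succAbove_of_le_castSucc _ _ (by simpa [Fin.le_def] using h)]; rfl

/-- Let `Γ : [n+r] → [n] × [r]` be a maximal chain and let
`v ∈ [n+r]` with `0 < v < n+r` satisfy
`Γ(v+1) = ((Γ(v−1)).fst + 1, (Γ(v−1)).snd + 1)`.  Then `Γ ∘ δ_v` is a global
chain, and:
(1) for every `i ≤ v`, `{ j | bs_Γ(j) ≥ i } = { j | bs_{Γ∘δ_v}(j) ≥ i }`;
(2) if `v ∈ Inn_fs(Γ)` (i.e. `Γ(v+1) = ((Γ v).fst + 1, (Γ v).snd)`), then for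
    every `i > v`, `{ j | bs_Γ(j) ≥ i } = { j | bs_{Γ∘δ_v}(j) ≥ i−1 }`;
(3) if `v ∈ Inn_bs(Γ)` (i.e. `Γ(v+1) = ((Γ v).fst, (Γ v).snd + 1)`), then for
    every `i > v+1`, `{ j | bs_Γ(j) ≥ i } = { j | bs_{Γ∘δ_v}(j) ≥ i−1 }`. -/
theorem bs_of_face (n r : ℕ)
    (Γ : Fin (n + r + 1) → Fin (n + 1) × Fin (r + 1))
    (hmono : Monotone Γ) (hinj : Function.Injective Γ)
    (v : ℕ) (hv0 : 0 < v) (hv1 : v < n + r)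
    (hstep1 : ((Γ ⟨v + 1, by omega⟩).1 : ℕ) = ((Γ ⟨v - 1, by omega⟩).1 : ℕ) + 1)
    (hstep2 : ((Γ ⟨v + 1, by omega⟩).2 : ℕ) = ((Γ ⟨v - 1, by omega⟩).2 : ℕ) + 1) :
    (Monotone (Γ ∘ (⟨v, by omega⟩ : Fin (n + r + 1)).succAbove) ∧
     Function.Injective (Γ ∘ (⟨v, by omega⟩ : Fin (n + r + 1)).succAbove) ∧
     Function.Surjective
       (fun k => ((Γ ∘ (⟨v, by omega⟩ : Fin (n + r + 1)).succAbove) k).1)) ∧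
    (∀ i : ℕ, i ≤ v →
      { j : Fin (n + 1) | i ≤ bsN Γ j } =
      { j : Fin (n + 1) |
          i ≤ bsN (Γ ∘ (⟨v, by omega⟩ : Fin (n + r + 1)).succAbove) j }) ∧
    ((((Γ ⟨v + 1, by omega⟩).1 : ℕ) = ((Γ ⟨v, by omega⟩).1 : ℕ) + 1 ∧
      ((Γ ⟨v + 1, by omega⟩).2 : ℕ) = ((Γ ⟨v, by omega⟩).2 : ℕ)) →
      ∀ i : ℕ, v < i →
        { j : Fin (n + 1) | i ≤ bsN Γ j } =
        { j : Fin (n + 1) |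
            i - 1 ≤ bsN (Γ ∘ (⟨v, by omega⟩ : Fin (n + r + 1)).succAbove) j }) ∧
    ((((Γ ⟨v + 1, by omega⟩).1 : ℕ) = ((Γ ⟨v, by omega⟩).1 : ℕ) ∧
      ((Γ ⟨v + 1, by omega⟩).2 : ℕ) = ((Γ ⟨v, by omega⟩).2 : ℕ) + 1) →
      ∀ i : ℕ, v + 1 < i →
        { j : Fin (n + 1) | i ≤ bsN Γ j } =
        { j : Fin (n + 1) |
            i - 1 ≤ bsN (Γ ∘ (⟨v, by omega⟩ : Fin (n + r + 1)).succAbove) j }) := by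
  have hs := chain_surj n r Γ hmono hinj
  have hv : v < n + r + 1 := by omega
  have hlo : ∀ k, ∀ hk : k < n + r, k < v →
      (Γ ∘ (⟨v, hv⟩ : Fin (n + r + 1)).succAbove) ⟨k, hk⟩ = Γ ⟨k, by omega⟩ := by
    intro k hk h
    rw [Function.comp_apply, succAbove_lo hv hk h]
  have hhi : ∀ k, ∀ hk : k < n + r, v ≤ k →
      (Γ ∘ (⟨v, hv⟩ : Fin (n + r + 1)).succAbove) ⟨k, hk⟩ = Γ ⟨k + 1, by omega⟩ := by
    intro k hk h
    rw [Function.comp_apply, succAbove_hi hv hk h]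
  have hs' : Function.Surjective
       (fun k => ((Γ ∘ (⟨v, hv⟩ : Fin (n + r + 1)).succAbove) k).1) := by
    intro j
    obtain ⟨⟨k, hk⟩, hkj⟩ := hs j
    simp only at hkj
    rcases lt_trichotomy k v with h | h | h
    · exact ⟨⟨k, by omega⟩, by simp only [hlo k (by omega) h]; exact hkj⟩
    · subst h
      have h1 : ((Γ ⟨k - 1, by omega⟩).1 : ℕ) ≤ ((Γ ⟨k, hk⟩).1 : ℕ) :=
        (hmono (Fin.mk_le_mk.mpr (Nat.sub_le k 1))).1
      have h2 : ((Γ ⟨k, hk⟩).1 : ℕ) ≤ ((Γ ⟨k + 1, by omega⟩).1 : ℕ) :=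
        (hmono (Fin.mk_le_mk.mpr (Nat.le_succ k))).1
      have h3 : ((Γ ⟨k, hk⟩).1 : ℕ) = j := congrArg Fin.val hkj
      by_cases hc : ((Γ ⟨k - 1, by omega⟩).1 : ℕ) = j
      · exact ⟨⟨k - 1, by omega⟩, by
          simp only [hlo (k - 1) (by omega) (by omega)]; exact Fin.ext hc⟩
      · exact ⟨⟨k, by omega⟩, by
          simp only [hhi k (by omega) le_rfl]; exact Fin.ext (by omega)⟩
    · obtain ⟨k, rfl⟩ : ∃ k', k = k' + 1 := ⟨k - 1, by omega⟩
      exact ⟨⟨k, by omega⟩, by simp only [hhi k (by omega) (by omega)]; exact hkj⟩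
  refine ⟨⟨hmono.comp (Fin.strictMono_succAbove _).monotone,
    hinj.comp Fin.succAbove_right_injective, hs'⟩, ?_, ?_, ?_⟩
  · intro i hi
    ext j
    simp only [Set.mem_setOf_eq]
    rw [le_bsN_iff _ hs, le_bsN_iff _ hs']
    constructor
    · intro H k hk h
      rw [hlo k h (by omega)]
      exact H k hk _
    · intro H k hk h
      rw [← hlo k (by omega) (by omega)]
      exact H k hk _
  all_goals
    rintro ⟨hf, -⟩ i hi
    ext j
    simp only [Set.mem_setOf_eq]
    rw [le_bsN_iff _ hs, le_bsN_iff _ hs']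
    constructor
    · intro H k hk h
      by_cases hkv : k < v
      · rw [hlo k h hkv]
        exact H k (by omega) _
      · rw [hhi k h (by omega)]
        exact H (k + 1) (by omega) _
    · intro H k hk h
      rcases lt_trichotomy k v with hkv | hkv | hkv
      · rw [← hlo k (by omega) hkv]
        exact H k (by omega) _
      · subst hkv
        first
        | have e : (Γ ⟨k, h⟩).1 = (Γ ⟨k - 1, by omega⟩).1 := Fin.ext (by omega)
          rw [e, ← hlo (k - 1) (by omega) (by omega)]
          exact H (k - 1) (by omega) _
        | have e : (Γ ⟨k, h⟩).1 = (Γ ⟨k + 1, by omega⟩).1 := Fin.ext (by omega)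
          rw [e, ← hhi k (by omega) le_rfl]
          exact H k (by omega) _
      · obtain ⟨k, rfl⟩ : ∃ k', k = k' + 1 := ⟨k - 1, by omega⟩
        rw [← hhi k (by omega) (by omega)]
        exact H k (by omega) _
end

section
/- Let Γ₁ : [n+r] → [n] × [r] be a maximal chain and α : [m] → [n] an injective monotone map. Suppose Γ₂ : [p] → [m] × [r] and β : [p] → [n+r] are monotone maps forming a pullback square over α × id and Γ₁; that is, (α((Γ₂ k).fst), (Γ₂ k).snd) = Γ₁(β k) for all k ∈ [p], and for every x ∈ [m] × [r] and y ∈ [n+r] with (α(x.fst), x.snd) = Γ₁(y) there is a unique k ∈ [p] with Γ₂(k) = x and β(k) = y. Then fst ∘ Γ₂ is surjective (so Γ₂ is a global chain), and β(bs_{Γ₂}(i)) = bs_{Γ₁}(α(i)) for every i ∈ [m]. -/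
open Finset

/-- `bs_Γ(i) = min { j | (Γ j).fst = i }` (defined to be `0` if the set is
empty; for global chains the set is always nonempty). -/
def bs {p n r : ℕ} (Γ : Fin (p + 1) → Fin (n + 1) × Fin (r + 1))
    (i : Fin (n + 1)) : Fin (p + 1) :=
  if h : (univ.filter fun j => (Γ j).1 = i).Nonempty
  then (univ.filter fun j => (Γ j).1 = i).min' h else 0

theorem aux_id (N : ℕ) (s : ℕ → ℕ) (h : ∀ k, k < N → s k < s (k + 1)) (hN : s N ≤ N) :
    ∀ k, k ≤ N → s k = k := by
  have h1 : ∀ k, k ≤ N → k ≤ s k := by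
    intro k
    induction k with
    | zero => intro _; omega
    | succ k ih => intro hk; have := h k (by omega); have := ih (by omega); omega
  have h2 : ∀ d, d ≤ N → s (N - d) + d ≤ N := by
    intro d
    induction d with
    | zero => intro _; simpa using hN
    | succ d ih =>
      intro hd
      have a := h (N - (d + 1)) (by omega)
      have b := ih (by omega)
      rw [show N - (d + 1) + 1 = N - d by omega] at a
      omega
  intro k hk
  have a := h1 k hk
  have b := h2 (N - k) (by omega)
  rw [show N - (N - k) = k by omega] at b
  omega

theorem aux_surj (n r : ℕ) (Γ : Fin (n + r + 1) → Fin (n + 1) × Fin (r + 1))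
    (hm : Monotone Γ) (hi : Function.Injective Γ) (i : Fin (n + 1)) : ∃ j, (Γ j).1 = i := by
  have hstep : ∀ k (h : k < n + r),
      ((Γ ⟨k, by omega⟩).1 : ℕ) ≤ (Γ ⟨k + 1, by omega⟩).1 ∧
      ((Γ ⟨k, by omega⟩).2 : ℕ) ≤ (Γ ⟨k + 1, by omega⟩).2 ∧
      ((Γ ⟨k, by omega⟩).1 : ℕ) + (Γ ⟨k, by omega⟩).2 <
        (Γ ⟨k + 1, by omega⟩).1 + (Γ ⟨k + 1, by omega⟩).2 := by
    intro k h
    have hle : Γ ⟨k, by omega⟩ ≤ Γ ⟨k + 1, by omega⟩ := hm (by simp)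
    have h1 : ((Γ ⟨k, by omega⟩).1 : ℕ) ≤ (Γ ⟨k + 1, by omega⟩).1 := hle.1
    have h2 : ((Γ ⟨k, by omega⟩).2 : ℕ) ≤ (Γ ⟨k + 1, by omega⟩).2 := hle.2
    refine ⟨h1, h2, ?_⟩
    by_contra hc
    have : Γ ⟨k, by omega⟩ = Γ ⟨k + 1, by omega⟩ :=
      Prod.ext (Fin.ext (by omega)) (Fin.ext (by omega))
    have := hi this
    simp at this
  have hid := aux_id (n + r)
    (fun k => if h : k < n + r + 1 then ((Γ ⟨k, h⟩).1 : ℕ) + (Γ ⟨k, h⟩).2 else 0)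
    (by
      intro k hk
      have h1 : k < n + r + 1 := by omega
      have h2 : k + 1 < n + r + 1 := by omega
      simp only [h1, h2, dif_pos]
      exact (hstep k hk).2.2)
    (by
      have h1 : n + r < n + r + 1 := by omega
      simp only [h1, dif_pos]
      omega)
  have hid' : ∀ k (h : k < n + r + 1), ((Γ ⟨k, h⟩).1 : ℕ) + (Γ ⟨k, h⟩).2 = k := by
    intro k h
    have := hid k (by omega)
    simpa only [h, dif_pos] using this
  have hex : ∃ k, ∃ h : k < n + r + 1, (i : ℕ) ≤ (Γ ⟨k, h⟩).1 := by
    refine ⟨n + r, by omega, ?_⟩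
    have := hid' (n + r) (by omega)
    omega
  classical
  obtain ⟨hlt, hge⟩ := Nat.find_spec hex
  have hmin := fun k (hk : k < Nat.find hex) => Nat.find_min hex hk
  generalize Nat.find hex = k at *
  refine ⟨⟨k, hlt⟩, Fin.ext ?_⟩
  have e1 := hid' k hlt
  cases k with
  | zero => omega
  | succ k =>
    have a := hmin k (by omega)
    have b : ¬ (i : ℕ) ≤ (Γ ⟨k, by omega⟩).1 := fun hh => a ⟨by omega, hh⟩
    have c := hstep k (by omega)
    have e2 := hid' k (by omega)
    omega

theorem bs_spec {p n r : ℕ} (Γ : Fin (p + 1) → Fin (n + 1) × Fin (r + 1))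
    (i : Fin (n + 1)) (h : ∃ j, (Γ j).1 = i) :
    (Γ (bs Γ i)).1 = i ∧ ∀ j, (Γ j).1 = i → bs Γ i ≤ j := by
  have h' : (univ.filter fun j => (Γ j).1 = i).Nonempty := by
    obtain ⟨j, hj⟩ := h
    exact ⟨j, by simp [hj]⟩
  unfold bs
  rw [dif_pos h']
  constructor
  · exact (Finset.mem_filter.mp (Finset.min'_mem _ h')).2
  · intro j hj
    exact Finset.min'_le _ _ (by simp [hj])

/-- Let `Γ₁ : [n+r] → [n] × [r]` be a maximal chain and
`α : [m] → [n]` an injective monotone map.  Suppose `Γ₂ : [p] → [m] × [r]` and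
`β : [p] → [n+r]` are monotone maps forming a pullback square over `α × id`
and `Γ₁`.  Then `fst ∘ Γ₂` is surjective (so `Γ₂` is a global chain), and
`β(bs_{Γ₂}(i)) = bs_{Γ₁}(α(i))` for every `i ∈ [m]`. -/
theorem pullback_bs (n r m p : ℕ)
    (Γ₁ : Fin (n + r + 1) → Fin (n + 1) × Fin (r + 1))
    (hΓ₁mono : Monotone Γ₁) (hΓ₁inj : Function.Injective Γ₁)
    (α : Fin (m + 1) → Fin (n + 1)) (hαmono : Monotone α)
    (hαinj : Function.Injective α)
    (Γ₂ : Fin (p + 1) → Fin (m + 1) × Fin (r + 1)) (hΓ₂mono : Monotone Γ₂)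
    (β : Fin (p + 1) → Fin (n + r + 1)) (hβmono : Monotone β)
    (hcomm : ∀ k, (α (Γ₂ k).1, (Γ₂ k).2) = Γ₁ (β k))
    (hpull : ∀ (x : Fin (m + 1) × Fin (r + 1)) (y : Fin (n + r + 1)),
      (α x.1, x.2) = Γ₁ y → ∃! k : Fin (p + 1), Γ₂ k = x ∧ β k = y) :
    Function.Surjective (fun k => (Γ₂ k).1) ∧
    ∀ i : Fin (m + 1), β (bs Γ₂ i) = bs Γ₁ (α i) := by
  have hlift : ∀ i y, (Γ₁ y).1 = α i → ∃ k, (Γ₂ k).1 = i ∧ β k = y := by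
    intro i y hy
    obtain ⟨k, ⟨h1, h2⟩, -⟩ := hpull (i, (Γ₁ y).2) y (Prod.ext hy.symm rfl)
    exact ⟨k, by rw [h1], h2⟩
  have hs : ∀ i, ∃ k, (Γ₂ k).1 = i := by
    intro i
    obtain ⟨y, hy⟩ := aux_surj n r Γ₁ hΓ₁mono hΓ₁inj (α i)
    obtain ⟨k, hk, -⟩ := hlift i y hy
    exact ⟨k, hk⟩
  refine ⟨hs, fun i => ?_⟩
  obtain ⟨a1, a2⟩ := bs_spec Γ₁ (α i) (aux_surj n r Γ₁ hΓ₁mono hΓ₁inj (α i))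
  obtain ⟨b1, b2⟩ := bs_spec Γ₂ i (hs i)
  apply le_antisymm
  · obtain ⟨k, hk, hk2⟩ := hlift i _ a1
    rw [← hk2]
    exact hβmono (b2 k hk)
  · apply a2
    rw [← hcomm, b1]
end

section
/- Let Γ₁ : [n+r] → [n] × [r] and Γ₂ : [m+r] → [m] × [r] be maximal chains, and let α : [m] → [n] and β : [m+r] → [n+r] be monotone maps such that (α((Γ₂ k).fst), (Γ₂ k).snd) = Γ₁(β k) for all k ∈ [m+r]. Then β(fs_{Γ₂}(i)) = fs_{Γ₁}(i) for every i with 1 ≤ i ≤ r. -/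
open Finset

/-- `fs_Γ(i) = min { j | (Γ j).snd ≥ i }` (defined to be `0` if the set is
empty; for maximal chains the set is always nonempty). -/
def fs {p n r : ℕ} (Γ : Fin (p + 1) → Fin (n + 1) × Fin (r + 1))
    (i : Fin (r + 1)) : Fin (p + 1) :=
  if h : (univ.filter fun j => i ≤ (Γ j).2).Nonempty
  then (univ.filter fun j => i ≤ (Γ j).2).min' h else 0

theorem chain_sum (n r : ℕ) (Γ : Fin (n + r + 1) → Fin (n + 1) × Fin (r + 1))
    (hm : Monotone Γ) (hi : Function.Injective Γ) (j : Fin (n + r + 1)) :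
    ((Γ j).1 : ℕ) + ((Γ j).2 : ℕ) = j := by
  have step : ∀ a b : Fin (n + r + 1), a < b →
      ((Γ a).1 : ℕ) + ((Γ a).2 : ℕ) < ((Γ b).1 : ℕ) + ((Γ b).2 : ℕ) := by
    intro a b hab
    have h1 : (Γ a).1 ≤ (Γ b).1 := (hm hab.le).1
    have h2 : (Γ a).2 ≤ (Γ b).2 := (hm hab.le).2
    rw [Fin.le_def] at h1 h2
    by_contra hcon
    apply hab.ne
    apply hi
    apply Prod.ext <;> apply Fin.ext <;> omega
  have low : ∀ k (hk : k < n + r + 1),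
      k ≤ ((Γ ⟨k, hk⟩).1 : ℕ) + ((Γ ⟨k, hk⟩).2 : ℕ) := by
    intro k
    induction k with
    | zero => intro _; omega
    | succ k ih =>
      intro hk
      have h1 := ih (by omega)
      have h2 := step ⟨k, by omega⟩ ⟨k + 1, hk⟩ (by simp [Fin.lt_def])
      omega
  have up : ∀ d k (hk : k < n + r + 1), k + d = n + r →
      ((Γ ⟨k, hk⟩).1 : ℕ) + ((Γ ⟨k, hk⟩).2 : ℕ) ≤ k := by
    intro d
    induction d with
    | zero => intro k hk h; omega
    | succ d ih =>
      intro k hk h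
      have h1 := ih (k + 1) (by omega) (by omega)
      have h2 := step ⟨k, hk⟩ ⟨k + 1, by omega⟩ (by simp [Fin.lt_def])
      omega
  exact le_antisymm (up (n + r - j) j j.2 (by omega)) (low j j.2)

theorem fs_eq_of {p n r : ℕ} (Γ : Fin (p + 1) → Fin (n + 1) × Fin (r + 1))
    (i : Fin (r + 1)) (k : Fin (p + 1)) (h1 : i ≤ (Γ k).2)
    (h2 : ∀ j, i ≤ (Γ j).2 → k ≤ j) : fs Γ i = k := by
  have hne : (univ.filter fun j => i ≤ (Γ j).2).Nonempty := ⟨k, by simp [h1]⟩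
  unfold fs
  rw [dif_pos hne]
  apply le_antisymm
  · exact min'_le _ _ (by simp [h1])
  · exact h2 _ (mem_filter.1 (min'_mem _ hne)).2

theorem fs_spec {p n r : ℕ} (Γ : Fin (p + 1) → Fin (n + 1) × Fin (r + 1))
    (i : Fin (r + 1)) (k : Fin (p + 1)) (h1 : i ≤ (Γ k).2) :
    i ≤ (Γ (fs Γ i)).2 ∧ ∀ j, i ≤ (Γ j).2 → fs Γ i ≤ j := by
  have hne : (univ.filter fun j => i ≤ (Γ j).2).Nonempty := ⟨k, by simp [h1]⟩
  unfold fs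
  rw [dif_pos hne]
  exact ⟨(mem_filter.1 (min'_mem _ hne)).2, fun j hj => min'_le _ _ (by simp [hj])⟩

/-- Let `Γ₁ : [n+r] → [n] × [r]` and `Γ₂ : [m+r] → [m] × [r]` be
maximal chains, and let `α : [m] → [n]` and `β : [m+r] → [n+r]` be monotone
maps such that `(α((Γ₂ k).fst), (Γ₂ k).snd) = Γ₁(β k)` for all `k`.  Then
`β(fs_{Γ₂}(i)) = fs_{Γ₁}(i)` for every `i` with `1 ≤ i ≤ r`. -/
theorem beta_fs (n r m : ℕ)
    (Γ₁ : Fin (n + r + 1) → Fin (n + 1) × Fin (r + 1))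
    (hΓ₁mono : Monotone Γ₁) (hΓ₁inj : Function.Injective Γ₁)
    (Γ₂ : Fin (m + r + 1) → Fin (m + 1) × Fin (r + 1))
    (hΓ₂mono : Monotone Γ₂) (hΓ₂inj : Function.Injective Γ₂)
    (α : Fin (m + 1) → Fin (n + 1)) (hαmono : Monotone α)
    (β : Fin (m + r + 1) → Fin (n + r + 1)) (hβmono : Monotone β)
    (hcomm : ∀ k, (α (Γ₂ k).1, (Γ₂ k).2) = Γ₁ (β k)) :
    ∀ i : Fin (r + 1), 1 ≤ (i : ℕ) → β (fs Γ₂ i) = fs Γ₁ i := by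
  intro i hi
  have s1 := chain_sum n r Γ₁ hΓ₁mono hΓ₁inj
  have s2 := chain_sum m r Γ₂ hΓ₂mono hΓ₂inj
  have hlast : i ≤ (Γ₂ (Fin.last (m + r))).2 := by
    have := s2 (Fin.last (m + r))
    simp only [Fin.val_last] at this
    rw [Fin.le_def]
    omega
  obtain ⟨hk, hkmin⟩ := fs_spec Γ₂ i _ hlast
  symm
  generalize fs Γ₂ i = k at hk hkmin ⊢
  have hk0 := s2 k
  rw [Fin.le_def] at hk
  obtain ⟨l, hl⟩ : ∃ l : Fin (m + r + 1), (l : ℕ) + 1 = k :=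
    ⟨⟨k - 1, by omega⟩, by simp; omega⟩
  have hlk : l ≤ k := by rw [Fin.le_def]; omega
  have hl2 : ((Γ₂ l).2 : ℕ) < i := by
    by_contra hcon
    have := hkmin l (by rw [Fin.le_def]; omega)
    rw [Fin.le_def] at this
    omega
  have hl0 := s2 l
  have hle : (Γ₂ l).1 ≤ (Γ₂ k).1 := (hΓ₂mono hlk).1
  have hfst : (Γ₂ l).1 = (Γ₂ k).1 := by
    rw [Fin.le_def] at hle
    apply Fin.ext
    omega
  have hfst' := congrArg Fin.val hfst
  have ck := s1 (β k)
  have cl := s1 (β l)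
  rw [← hcomm] at ck cl
  rw [hfst] at cl
  simp only at ck cl
  apply fs_eq_of
  · rw [← hcomm, Fin.le_def]; exact hk
  · intro j hj
    by_contra hcon
    have hjl : j ≤ β l := by
      rw [Fin.le_def] at hcon ⊢
      omega
    have h2 : (Γ₁ j).2 ≤ (Γ₁ (β l)).2 := (hΓ₁mono hjl).2
    rw [← hcomm] at h2
    have h3 := hj.trans h2
    rw [Fin.le_def] at h3
    simp only at h3
    omega
end

section
/- Let Γ₁ : [n+r] → [n] × [r] be a maximal chain, α : [m] → [n] an injective monotone map, and let Γ₂ : [p] → [m] × [r] and β : [p] → [n+r] be monotone maps forming a pullback square over α × id and Γ₁ (i.e., (α((Γ₂ k).fst), (Γ₂ k).snd) = Γ₁(β k) for all k, and for every x ∈ [m] × [r], y ∈ [n+r] with (α(x.fst), x.snd) = Γ₁(y) there is a unique k ∈ [p] with Γ₂(k) = x and β(k) = y). If p < m + r (i.e., Γ₂ is not maximal), then there exists l ∈ [n] with l ∉ Im(α) such that bs_{Γ₁}(l) + 1 ∉ Im(bs_{Γ₁}), i.e., there is no l' ∈ [n] with (bs_{Γ₁}(l') : ℕ) = (bs_{Γ₁}(l)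 : ℕ) + 1. -/
/-- Let `Γ₁ : [n+r] → [n] × [r]` be a maximal chain,
`α : [m] → [n]` an injective monotone map, and let `Γ₂ : [p] → [m] × [r]`
and `β : [p] → [n+r]` be monotone maps forming a pullback square over
`α × id` and `Γ₁`.  If `p < m + r` (i.e. `Γ₂` is not maximal), then there
exists `l ∈ [n]` with `l ∉ Im(α)` such that `bs_{Γ₁}(l) + 1 ∉ Im(bs_{Γ₁})`. -/
theorem pullback_not_maximal (n r m p : ℕ) (hp : p < m + r)
    (Γ₁ : Fin (n + r + 1) → Fin (n + 1) × Fin (r + 1))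
    (hΓ₁mono : Monotone Γ₁) (hΓ₁inj : Function.Injective Γ₁)
    (α : Fin (m + 1) → Fin (n + 1)) (hαmono : Monotone α)
    (hαinj : Function.Injective α)
    (Γ₂ : Fin (p + 1) → Fin (m + 1) × Fin (r + 1)) (hΓ₂mono : Monotone Γ₂)
    (β : Fin (p + 1) → Fin (n + r + 1)) (hβmono : Monotone β)
    (hcomm : ∀ k, (α (Γ₂ k).1, (Γ₂ k).2) = Γ₁ (β k))
    (hpull : ∀ (x : Fin (m + 1) × Fin (r + 1)) (y : Fin (n + r + 1)),
      (α x.1, x.2) = Γ₁ y → ∃! k : Fin (p + 1), Γ₂ k = x ∧ β k = y) :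
    ∃ l : Fin (n + 1), (∀ i : Fin (m + 1), α i ≠ l) ∧
      ∀ l' : Fin (n + 1), bsN Γ₁ l' ≠ bsN Γ₁ l + 1 := by
  classical
  by_contra hcon
  push Not at hcon
  have key : ∀ y y' : Fin (n + r + 1), (∀ i, α i ≠ (Γ₁ y).1) → (Γ₁ y).1 = (Γ₁ y').1 →
      y = y' := by
    have aux : ∀ y : Fin (n + r + 1), (∀ i, α i ≠ (Γ₁ y).1) → (y : ℕ) = bsN Γ₁ (Γ₁ y).1 := by
      intro y hy
      obtain ⟨l', hl'⟩ := hcon _ hy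
      have hmem : (y : ℕ) ∈ { j : ℕ | ∃ h : j < n + r + 1, (Γ₁ ⟨j, h⟩).1 = (Γ₁ y).1 } :=
        ⟨y.2, rfl⟩
      have hle : bsN Γ₁ (Γ₁ y).1 ≤ y := Nat.sInf_le hmem
      obtain ⟨hb, hb1⟩ := Nat.sInf_mem (⟨_, hmem⟩ : Set.Nonempty _)
      change bsN Γ₁ (Γ₁ y).1 < n + r + 1 at hb
      change (Γ₁ ⟨bsN Γ₁ (Γ₁ y).1, hb⟩).1 = (Γ₁ y).1 at hb1
      by_contra hne
      have hne' : Set.Nonempty { j : ℕ | ∃ h : j < n + r + 1, (Γ₁ ⟨j, h⟩).1 = l' } := by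
        by_contra h
        rw [Set.not_nonempty_iff_eq_empty] at h
        unfold bsN at hl'
        rw [h, Nat.sInf_empty] at hl'
        omega
      obtain ⟨hc, hc1⟩ := Nat.sInf_mem hne'
      change bsN Γ₁ l' < n + r + 1 at hc
      change (Γ₁ ⟨bsN Γ₁ l', hc⟩).1 = l' at hc1
      have h1 : (Γ₁ ⟨bsN Γ₁ (Γ₁ y).1, hb⟩).1 ≤ (Γ₁ ⟨bsN Γ₁ l', hc⟩).1 :=
        (hΓ₁mono (by rw [Fin.mk_le_mk]; omega)).1
      have h2 : (Γ₁ ⟨bsN Γ₁ l', hc⟩).1 ≤ (Γ₁ y).1 :=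
        (hΓ₁mono (by rw [Fin.le_def]; simp only []; omega)).1
      rw [hb1] at h1
      have h3 : l' = (Γ₁ y).1 := by rw [← hc1]; exact le_antisymm h2 h1
      rw [h3] at hl'
      omega
    intro y y' hy hyy
    apply Fin.ext
    rw [aux y hy, aux y' (by rwa [← hyy]), hyy]
  let S : Finset (Fin (n + r + 1)) := Finset.univ.filter (fun y => ∀ i, α i ≠ (Γ₁ y).1)
  have hS : S.card ≤ ((Finset.univ.image α)ᶜ).card := by
    apply Finset.card_le_card_of_injOn (fun y => (Γ₁ y).1)
    · intro y hy
      simpa [S] using hy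
    · intro y hy y' _ h
      exact key y y' (by simpa [S] using hy) h
  have hSc : Sᶜ.card ≤ p + 1 := by
    have hsub : Sᶜ ⊆ Finset.univ.image β := by
      intro y hy
      have hy' : ∃ i, α i = (Γ₁ y).1 := by simpa [S] using hy
      obtain ⟨i, hi⟩ := hy'
      obtain ⟨k, ⟨_, hk⟩, _⟩ := hpull (i, (Γ₁ y).2) y (Prod.ext hi rfl)
      exact Finset.mem_image.2 ⟨k, Finset.mem_univ _, hk⟩
    calc Sᶜ.card ≤ _ := Finset.card_le_card hsub
      _ ≤ _ := Finset.card_image_le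
      _ = p + 1 := by simp
  have hmn := Fintype.card_le_of_injective α hαinj
  rw [Finset.card_compl, Finset.card_image_of_injective _ hαinj] at hS
  rw [Finset.card_compl] at hSc
  simp only [Fintype.card_fin, Finset.card_univ] at hS hSc hmn
  omega
end

section
/- Let Γ : [n+r] → [n] × [r] be a maximal chain and α : [m] → [n] an injective monotone map. Then the pullback poset P := { (x, y) ∈ ([m] × [r]) × [n+r] | (α(x.fst), x.snd) = Γ(y) }, with the componentwise order, is totally ordered: for all (x₁,y₁), (x₂,y₂) ∈ P, either (x₁ ≤ x₂ and y₁ ≤ y₂) or (x₂ ≤ x₁ and y₂ ≤ y₁). Equivalently, if x₁, x₂ ∈ [m] × [r] are such that both (α(x₁.fst), x₁.snd) and (α(x₂.fst), x₂.snd) lie in the image of Γ, then x₁ ≤ x₂ or x₂ ≤ x₁. -/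
/-- Let `Γ : [n+r] → [n] × [r]` be a maximal chain and
`α : [m] → [n]` an injective monotone map.  Then the pullback poset
`P := { (x, y) | (α(x.fst), x.snd) = Γ(y) }`, with the componentwise order,
is totally ordered. -/
theorem pullback_totally_ordered (n r m : ℕ)
    (Γ : Fin (n + r + 1) → Fin (n + 1) × Fin (r + 1))
    (hΓmono : Monotone Γ) (hΓinj : Function.Injective Γ)
    (α : Fin (m + 1) → Fin (n + 1)) (hαmono : Monotone α)
    (hαinj : Function.Injective α) :
    ∀ z₁ z₂ : (Fin (m + 1) × Fin (r + 1)) × Fin (n + r + 1),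
      (α z₁.1.1, z₁.1.2) = Γ z₁.2 → (α z₂.1.1, z₂.1.2) = Γ z₂.2 →
      z₁ ≤ z₂ ∨ z₂ ≤ z₁ := by
  have key : ∀ z₁ z₂ : (Fin (m + 1) × Fin (r + 1)) × Fin (n + r + 1),
      (α z₁.1.1, z₁.1.2) = Γ z₁.2 → (α z₂.1.1, z₂.1.2) = Γ z₂.2 →
      z₁.2 ≤ z₂.2 → z₁ ≤ z₂ := by
    intro z₁ z₂ h₁ h₂ h
    have hle := hΓmono h
    rw [← h₁, ← h₂] at hle
    exact ⟨⟨(hαmono.strictMono_of_injective hαinj).le_iff_le.1 hle.1, hle.2⟩, h⟩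
  intro z₁ z₂ h₁ h₂
  exact (le_total z₁.2 z₂.2).imp (key z₁ z₂ h₁ h₂) (key z₂ z₁ h₂ h₁)
end

section
/- Let r ≥ 1, let Γ : [n+r] → [n] × [r] be a maximal chain, and let v ∈ [n+r] be such that (Γ k).snd ≠ (Γ v).snd for every k ≠ v (i.e., the second-coordinate value of Γ at v is attained only at v). Then there exists a unique pair (Γ_v, h) consisting of a maximal chain Γ_v : [n+r−1] → [n] × [r−1] and an element h ∈ [r] such that Γ(δ_v(k)) = ((Γ_v k).fst, δ_h((Γ_v k).snd)) for all k ∈ [n+r−1]; moreover necessarily h = (Γ v).snd. -/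
theorem snd_surj_aux (n r : ℕ) (hr : 1 ≤ r)
    (Γ : Fin (n + r + 1) → Fin (n + 1) × Fin (r + 1))
    (hΓmono : Monotone Γ) (hΓinj : Function.Injective Γ) (h : Fin (r + 1)) :
    ∃ k, (Γ k).2 = h := by
  by_contra hne
  push Not at hne
  let f : Fin (n + r + 1) → ℕ := fun k =>
    (Γ k).1.val + (if h.val < (Γ k).2.val then (Γ k).2.val - 1 else (Γ k).2.val)
  have hval : ∀ k, (Γ k).2.val ≠ h.val := fun k e => hne k (Fin.ext e)
  have hf : StrictMono f := by
    intro a b hab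
    have h1 := hΓmono hab.le
    have h2 : Γ a ≠ Γ b := fun e => hab.ne (hΓinj e)
    have h3 : (Γ a).1.val ≤ (Γ b).1.val := h1.1
    have h4 : (Γ a).2.val ≤ (Γ b).2.val := h1.2
    have h5 : ¬ ((Γ a).1.val = (Γ b).1.val ∧ (Γ a).2.val = (Γ b).2.val) :=
      fun e => h2 (Prod.ext (Fin.ext e.1) (Fin.ext e.2))
    have ha := hval a
    have hb := hval b
    simp only [f]
    split_ifs <;> omega
  have key : ∀ m : ℕ, ∀ hm : m < n + r + 1, m ≤ f ⟨m, hm⟩ := by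
    intro m
    induction m with
    | zero => intro _; exact Nat.zero_le _
    | succ m ih =>
      intro hm
      have h1 := ih (by omega)
      have h2 : f ⟨m, by omega⟩ < f ⟨m + 1, hm⟩ := hf (by simp [Fin.lt_def])
      omega
  have hl := key (n + r) (by omega)
  have hb := hval ⟨n + r, by omega⟩
  have h1 := (Γ ⟨n + r, by omega⟩).1.isLt
  have h2 := (Γ ⟨n + r, by omega⟩).2.isLt
  have h3 := h.isLt
  simp only [f] at hl
  split_ifs at hl <;> omega

/-- Let `r ≥ 1`, let `Γ : [n+r] → [n] × [r]` be a maximal chain,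
and let `v ∈ [n+r]` be such that the second-coordinate value of `Γ` at `v` is
attained only at `v`.  Then there exists a unique pair `(Γ_v, h)` consisting
of a maximal chain `Γ_v : [n+r−1] → [n] × [r−1]` and an element `h ∈ [r]`
such that `Γ(δ_v(k)) = ((Γ_v k).fst, δ_h((Γ_v k).snd))` for all `k`;
moreover necessarily `h = (Γ v).snd`. -/
theorem degenerate_coordinate_factor (n r : ℕ) (hr : 1 ≤ r)
    (Γ : Fin (n + r + 1) → Fin (n + 1) × Fin (r + 1))
    (hΓmono : Monotone Γ) (hΓinj : Function.Injective Γ)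
    (v : Fin (n + r + 1))
    (hv : ∀ k : Fin (n + r + 1), k ≠ v → (Γ k).2 ≠ (Γ v).2) :
    (∃! P : (Fin (n + r) → Fin (n + 1) × Fin r) × Fin (r + 1),
      Monotone P.1 ∧ Function.Injective P.1 ∧
      ∀ k : Fin (n + r),
        Γ (v.succAbove k) = ((P.1 k).1, P.2.succAbove (P.1 k).2)) ∧
    (∀ P : (Fin (n + r) → Fin (n + 1) × Fin r) × Fin (r + 1),
      (Monotone P.1 ∧ Function.Injective P.1 ∧
       ∀ k : Fin (n + r),
         Γ (v.succAbove k) = ((P.1 k).1, P.2.succAbove (P.1 k).2)) →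
      P.2 = (Γ v).2) := by
  have nec : ∀ P : (Fin (n + r) → Fin (n + 1) × Fin r) × Fin (r + 1),
      (Monotone P.1 ∧ Function.Injective P.1 ∧
       ∀ k : Fin (n + r),
         Γ (v.succAbove k) = ((P.1 k).1, P.2.succAbove (P.1 k).2)) →
      P.2 = (Γ v).2 := by
    rintro P ⟨-, -, hP⟩
    obtain ⟨k, hk⟩ := snd_surj_aux n r hr Γ hΓmono hΓinj P.2
    by_cases hkv : k = v
    · rw [← hk, hkv]
    · obtain ⟨j, rfl⟩ := Fin.exists_succAbove_eq hkv
      rw [hP j] at hk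
      exact absurd hk (Fin.succAbove_ne _ _)
  refine ⟨?_, nec⟩
  have hex : ∀ k : Fin (n + r), ∃ j : Fin r,
      (Γ v).2.succAbove j = (Γ (v.succAbove k)).2 := fun k =>
    Fin.exists_succAbove_eq (hv _ (Fin.succAbove_ne _ _))
  choose g hg using hex
  refine ⟨(fun k => ((Γ (v.succAbove k)).1, g k), (Γ v).2), ⟨?_, ?_, ?_⟩, ?_⟩
  · intro a b hab
    have h1 := hΓmono ((Fin.strictMono_succAbove v).monotone hab)
    refine ⟨h1.1, ?_⟩
    have h2 := h1.2
    rw [← hg a, ← hg b] at h2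
    exact (Fin.strictMono_succAbove _).le_iff_le.1 h2
  · intro a b hab
    have h1 := congrArg Prod.fst hab
    have h2 : g a = g b := congrArg Prod.snd hab
    apply Fin.succAbove_right_injective (p := v)
    apply hΓinj
    refine Prod.ext h1 ?_
    rw [← hg a, ← hg b, h2]
  · intro k
    exact Prod.ext rfl (hg k).symm
  · rintro P hP
    have hn := nec P hP
    obtain ⟨-, -, hP⟩ := hP
    refine Prod.ext (funext fun k => ?_) hn
    have h1 := hP k
    refine Prod.ext ?_ ?_
    · simp [h1]
    · apply Fin.succAbove_right_injective (p := (Γ v).2)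
      show (Γ v).2.succAbove (P.1 k).2 = (Γ v).2.succAbove (g k)
      rw [hg k, h1, hn]
end

section
/- Let Γ : [n+r] → [n] × [r] be a maximal chain and let v ∈ [n+r] with 0 < v < n+r be such that Γ(v+1) = ((Γ(v−1)).fst + 1, (Γ(v−1)).snd + 1). Then there exists exactly one maximal chain Γ' : [n+r] → [n] × [r] with Γ' ≠ Γ and Γ ∘ δ_v = Γ' ∘ δ_v. Explicitly, Γ'(k) = Γ(k) for k ≠ v, and Γ'(v) = ((Γ(v−1)).fst + 1, (Γ(v−1)).snd) if Γ(v) = ((Γ(v−1)).fst, (Γ(v−1)).snd + 1), while Γ'(v) = ((Γ(v−1)).fst, (Γ(v−1)).snd + 1) if Γ(v) = ((Γ(v−1)).fst + 1, (Γ(v−1)).snd). -/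
theorem flip_mid {N n r : ℕ} (G : Fin N → Fin (n + 1) × Fin (r + 1))
    (hm : Monotone G) (hi : Function.Injective G) (p m q : Fin N) (hpm : p < m) (hmq : m < q)
    (h1 : ((G q).1 : ℕ) = (G p).1 + 1) (h2 : ((G q).2 : ℕ) = (G p).2 + 1) :
    (((G m).1 : ℕ) = (G p).1 ∧ ((G m).2 : ℕ) = (G p).2 + 1) ∨
    (((G m).1 : ℕ) = (G p).1 + 1 ∧ ((G m).2 : ℕ) = (G p).2) := by
  have a := hm hpm.le
  have b := hm hmq.le
  have c : G p ≠ G m := fun h => hpm.ne (hi h)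
  have d : G m ≠ G q := fun h => hmq.ne (hi h)
  rw [Prod.le_def, Fin.le_def, Fin.le_def] at a b
  rw [Ne, Prod.ext_iff, Fin.ext_iff, Fin.ext_iff] at c d
  omega

theorem flip_strict {N : ℕ} {α : Type*} [PartialOrder α] (G : Fin N → α)
    (hs : StrictMono G) (p m q : Fin N)
    (hp : ∀ i, i < m → i ≤ p) (hq : ∀ i, m < i → q ≤ i) (w : α)
    (h1 : G p < w) (h2 : w < G q) : StrictMono (Function.update G m w) := by
  intro i j hij
  by_cases hi : i = m
  · subst hi
    rw [Function.update_self, Function.update_of_ne hij.ne']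
    exact h2.trans_le (hs.monotone (hq _ hij))
  · by_cases hj : j = m
    · subst hj
      rw [Function.update_self, Function.update_of_ne hij.ne]
      exact (hs.monotone (hp _ hij)).trans_lt h1
    · rw [Function.update_of_ne hi, Function.update_of_ne hj]
      exact hs hij

/-- Let `Γ : [n+r] → [n] × [r]` be a maximal chain and let
`v ∈ [n+r]` with `0 < v < n+r` be such that
`Γ(v+1) = ((Γ(v−1)).fst + 1, (Γ(v−1)).snd + 1)`.  Then there exists exactly
one maximal chain `Γ'` with `Γ' ≠ Γ` and `Γ ∘ δ_v = Γ' ∘ δ_v`.  Explicitly,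
`Γ'(k) = Γ(k)` for `k ≠ v`, and `Γ'(v) = ((Γ(v−1)).fst + 1, (Γ(v−1)).snd)`
if `Γ(v) = ((Γ(v−1)).fst, (Γ(v−1)).snd + 1)`, while
`Γ'(v) = ((Γ(v−1)).fst, (Γ(v−1)).snd + 1)` if
`Γ(v) = ((Γ(v−1)).fst + 1, (Γ(v−1)).snd)`. -/
theorem flip_at_inner_vertex (n r : ℕ)
    (Γ : Fin (n + r + 1) → Fin (n + 1) × Fin (r + 1))
    (hΓmono : Monotone Γ) (hΓinj : Function.Injective Γ)
    (v : ℕ) (hv0 : 0 < v) (hv1 : v < n + r)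
    (hstep1 : ((Γ ⟨v + 1, by omega⟩).1 : ℕ) = ((Γ ⟨v - 1, by omega⟩).1 : ℕ) + 1)
    (hstep2 : ((Γ ⟨v + 1, by omega⟩).2 : ℕ) = ((Γ ⟨v - 1, by omega⟩).2 : ℕ) + 1) :
    (∃! Γ' : Fin (n + r + 1) → Fin (n + 1) × Fin (r + 1),
      Monotone Γ' ∧ Function.Injective Γ' ∧ Γ' ≠ Γ ∧
      ∀ k : Fin (n + r),
        Γ' ((⟨v, by omega⟩ : Fin (n + r + 1)).succAbove k) =
        Γ ((⟨v, by omega⟩ : Fin (n + r + 1)).succAbove k)) ∧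
    (∀ Γ' : Fin (n + r + 1) → Fin (n + 1) × Fin (r + 1),
      (Monotone Γ' ∧ Function.Injective Γ' ∧ Γ' ≠ Γ ∧
       ∀ k : Fin (n + r),
         Γ' ((⟨v, by omega⟩ : Fin (n + r + 1)).succAbove k) =
         Γ ((⟨v, by omega⟩ : Fin (n + r + 1)).succAbove k)) →
      ((∀ k : Fin (n + r + 1), k ≠ ⟨v, by omega⟩ → Γ' k = Γ k) ∧
       ((((Γ ⟨v, by omega⟩).1 : ℕ) = ((Γ ⟨v - 1, by omega⟩).1 : ℕ) ∧
         ((Γ ⟨v, by omega⟩).2 : ℕ) = ((Γ ⟨v - 1, by omega⟩).2 : ℕ) + 1) →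
         (((Γ' ⟨v, by omega⟩).1 : ℕ) = ((Γ ⟨v - 1, by omega⟩).1 : ℕ) + 1 ∧
          ((Γ' ⟨v, by omega⟩).2 : ℕ) = ((Γ ⟨v - 1, by omega⟩).2 : ℕ))) ∧
       ((((Γ ⟨v, by omega⟩).1 : ℕ) = ((Γ ⟨v - 1, by omega⟩).1 : ℕ) + 1 ∧
         ((Γ ⟨v, by omega⟩).2 : ℕ) = ((Γ ⟨v - 1, by omega⟩).2 : ℕ)) →
         (((Γ' ⟨v, by omega⟩).1 : ℕ) = ((Γ ⟨v - 1, by omega⟩).1 : ℕ) ∧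
          ((Γ' ⟨v, by omega⟩).2 : ℕ) = ((Γ ⟨v - 1, by omega⟩).2 : ℕ) + 1)))) := by
  have hpm : (⟨v - 1, by omega⟩ : Fin (n + r + 1)) < ⟨v, by omega⟩ := by
    rw [Fin.lt_def]; simp only; omega
  have hmq : (⟨v, by omega⟩ : Fin (n + r + 1)) < ⟨v + 1, by omega⟩ := by
    rw [Fin.lt_def]; simp only; omega
  have hp : ∀ i : Fin (n + r + 1), i < ⟨v, by omega⟩ → i ≤ ⟨v - 1, by omega⟩ := by
    intro i h; rw [Fin.lt_def] at h; rw [Fin.le_def]; simp only at *; omega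
  have hq : ∀ i : Fin (n + r + 1), ⟨v, by omega⟩ < i → ⟨v + 1, by omega⟩ ≤ i := by
    intro i h; rw [Fin.lt_def] at h; rw [Fin.le_def]; simp only at *; omega
  generalize (⟨v - 1, by omega⟩ : Fin (n + r + 1)) = p at *
  generalize (⟨v, by omega⟩ : Fin (n + r + 1)) = m at *
  generalize (⟨v + 1, by omega⟩ : Fin (n + r + 1)) = q at *
  have hmid := flip_mid Γ hΓmono hΓinj p m q hpm hmq hstep1 hstep2
  have agree : ∀ G : Fin (n + r + 1) → Fin (n + 1) × Fin (r + 1),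
      (∀ k : Fin (n + r), G (m.succAbove k) = Γ (m.succAbove k)) →
      ∀ k, k ≠ m → G k = Γ k := by
    intro G h k hk
    obtain ⟨z, rfl⟩ := Fin.exists_succAbove_eq hk
    exact h z
  have key : ∀ G : Fin (n + r + 1) → Fin (n + 1) × Fin (r + 1),
      (Monotone G ∧ Function.Injective G ∧ G ≠ Γ ∧
        ∀ k : Fin (n + r), G (m.succAbove k) = Γ (m.succAbove k)) →
      (∀ k, k ≠ m → G k = Γ k) ∧
      ((G m).1 : ℕ) + (Γ m).1 = 2 * (Γ p).1 + 1 ∧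
      ((G m).2 : ℕ) + (Γ m).2 = 2 * (Γ p).2 + 1 := by
    rintro G ⟨gm, gi, gn, ga⟩
    have ha := agree G ga
    have ep := ha p hpm.ne
    have eq := ha q hmq.ne'
    have hg := flip_mid G gm gi p m q hpm hmq (by rw [ep, eq]; exact hstep1)
      (by rw [ep, eq]; exact hstep2)
    rw [ep] at hg
    have hne : G m ≠ Γ m := by
      intro h
      apply gn
      funext k
      by_cases hk : k = m
      · rw [hk, h]
      · exact ha k hk
    rw [Ne, Prod.ext_iff, Fin.ext_iff, Fin.ext_iff] at hne
    refine ⟨ha, ?_, ?_⟩ <;> omega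
  refine ⟨?_, ?_⟩
  · have l1 := (Γ q).1.isLt
    have l2 := (Γ q).2.isLt
    have hw : ∃ w : Fin (n + 1) × Fin (r + 1),
        (w.1 : ℕ) + (Γ m).1 = 2 * (Γ p).1 + 1 ∧ (w.2 : ℕ) + (Γ m).2 = 2 * (Γ p).2 + 1 := by
      refine ⟨(⟨2 * (Γ p).1 + 1 - (Γ m).1, by omega⟩, ⟨2 * (Γ p).2 + 1 - (Γ m).2, by omega⟩),
        ?_, ?_⟩ <;> simp only <;> omega
    obtain ⟨w, w1, w2⟩ := hw
    have hs : StrictMono (Function.update Γ m w) := by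
      apply flip_strict Γ (hΓmono.strictMono_of_injective hΓinj) p m q hp hq
      · rw [Prod.lt_iff, Fin.lt_def, Fin.le_def, Fin.le_def, Fin.lt_def]; omega
      · rw [Prod.lt_iff, Fin.lt_def, Fin.le_def, Fin.le_def, Fin.lt_def]; omega
    refine ⟨Function.update Γ m w, ⟨hs.monotone, hs.injective, ?_, ?_⟩, ?_⟩
    · intro h
      have h' := congrFun h m
      rw [Function.update_self] at h'
      rw [h'] at w1
      omega
    · intro k
      rw [Function.update_of_ne (Fin.succAbove_ne m k)]
    · intro G hG
      obtain ⟨ha, e1, e2⟩ := key G hG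
      funext k
      by_cases hk : k = m
      · rw [hk, Function.update_self]
        rw [Prod.ext_iff, Fin.ext_iff, Fin.ext_iff]
        omega
      · rw [Function.update_of_ne hk, ha k hk]
  · intro G hG
    obtain ⟨ha, e1, e2⟩ := key G hG
    refine ⟨ha, ?_, ?_⟩ <;> intro h <;> omega
end

section
/- Let σ be an index type, let i, j, k ∈ σ with j ≠ k, and let f ∈ ℚ[x_s : s ∈ σ] be a polynomial in which the variable x_j does not occur (j ∉ f.vars). Then ∂_j ( ∫_{x_j}^{x_k} f dx_i ) = − ε_{i,x_j}(f). -/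
open MvPolynomial

/-- The ℚ-linear antiderivative in the variable `x_i`: each monomial `m` is
sent to `(x_i · m)/(k+1)` where `k` is the exponent of `x_i` in `m`. -/
noncomputable def antideriv {σ : Type*} [DecidableEq σ] (i : σ)
    (f : MvPolynomial σ ℚ) : MvPolynomial σ ℚ :=
  f.support.sum fun m =>
    monomial (m + Finsupp.single i 1) (f.coeff m / ((m i : ℚ) + 1))

/-- The ℚ-algebra endomorphism `ε_{i,t}` substituting `x_i ↦ t` and fixing
all other variables. -/
noncomputable def subst {σ : Type*} [DecidableEq σ] (i : σ)
    (t : MvPolynomial σ ℚ) : MvPolynomial σ ℚ →ₐ[ℚ] MvPolynomial σ ℚ :=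
  aeval fun s => if s = i then t else X s

/-- The definite integral `∫_a^b f dx_i := ε_{i,b}(A_i f) − ε_{i,a}(A_i f)`. -/
noncomputable def integ {σ : Type*} [DecidableEq σ] (i : σ)
    (a b f : MvPolynomial σ ℚ) : MvPolynomial σ ℚ :=
  subst i b (antideriv i f) - subst i a (antideriv i f)

theorem subst_monomial_aux {σ : Type*} [DecidableEq σ] (i : σ) (t : MvPolynomial σ ℚ)
    (m : σ →₀ ℕ) (c : ℚ) :
    subst i t (monomial m c) = C c * (t ^ (m i) * monomial (m.erase i) 1) := by
  have h : (monomial m c : MvPolynomial σ ℚ)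
      = C c * (X i ^ (m i) * monomial (m.erase i) 1) := by
    rw [X_pow_eq_monomial, monomial_mul, C_mul_monomial, Finsupp.single_add_erase]
    simp
  have h2 : subst i t (monomial (m.erase i) 1) = monomial (m.erase i) 1 := by
    rw [subst, aeval_monomial, monomial_eq]
    simp only [map_one, one_mul]
    apply Finsupp.prod_congr
    intro s hs
    have : s ≠ i := by
      rintro rfl
      simp at hs
    simp [this]
  have h3 : subst i t (X i) = t := by simp [subst]
  have h4 : subst i t (C c) = C c := by
    simp [subst, algebraMap_eq]
  rw [h, map_mul, map_mul, map_pow, h2, h3, h4]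

/-- Let `i, j, k` be variable indices with `j ≠ k`, and let `f`
be a polynomial over `ℚ` in which the variable `x_j` does not occur.  Then
`∂_j ( ∫_{x_j}^{x_k} f dx_i ) = − ε_{i,x_j}(f)`. -/
theorem pderiv_integ_var_bound {σ : Type*} [DecidableEq σ] (i j k : σ)
    (hjk : j ≠ k) (f : MvPolynomial σ ℚ) (hf : j ∉ f.vars) :
    pderiv j (integ i (X j) (X k) f) = - subst i (X j) f := by
  have hm : ∀ m ∈ f.support, m j = 0 := by
    intro m hm
    by_contra h
    exact hf (by rw [mem_vars]; exact ⟨m, hm, by simpa using h⟩)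
  have hs : subst i (X j) f
      = f.support.sum fun m => subst i (X j) (monomial m (f.coeff m)) := by
    rw [← map_sum, ← f.as_sum]
  rw [hs, integ, antideriv, map_sum, map_sum, ← Finset.sum_sub_distrib, map_sum,
    ← Finset.sum_neg_distrib]
  refine Finset.sum_congr rfl fun m hmm => ?_
  have h0 := hm m hmm
  have he : (m + Finsupp.single i 1).erase i = m.erase i := by
    ext s
    by_cases h : s = i
    · subst h; simp
    · simp [Finsupp.erase_ne h, h]
  have hej : (m.erase i) j = 0 := by
    by_cases h : j = i
    · subst h; simp
    · rw [Finsupp.erase_ne h, h0]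
  have hd : pderiv j (monomial (m.erase i) (1 : ℚ)) = 0 := by
    rw [pderiv_monomial, hej]; simp
  have hk : pderiv j (X k : MvPolynomial σ ℚ) = 0 := pderiv_X_of_ne hjk.symm
  simp only [subst_monomial_aux, he]
  have hq : ((m i : ℚ) + 1) ≠ 0 := by positivity
  have hc : (C (f.coeff m) : MvPolynomial σ ℚ)
      = C (f.coeff m / ((m i : ℚ) + 1)) * ((m i : MvPolynomial σ ℚ) + 1) := by
    rw [← map_natCast (C : ℚ →+* MvPolynomial σ ℚ), ← map_one (C : ℚ →+* MvPolynomial σ ℚ), ← map_add, ← map_mul,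
      div_mul_cancel₀ _ hq]
  rw [hc]
  simp [Derivation.leibniz, Derivation.leibniz_pow, hd, hk, pderiv_X_self]
  ring
end
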